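/- Let K be any field and L ⊆ ℤ^m a nonzero positive lattice. Suppose the lattice ideal I_L has a generating set {B_1,…,B_t} consisting of binomials each of which is a difference of two squarefree monomials, and suppose that I_L has a unique minimal system of binomial generators (that is, there is a binomial generating set of I_L of cardinality μ(I_L) each of whose elements B has the property that every binomial generating set of I_L contains B or −B). Then bar(I_L) = μ(I_L). -/

import Mathlib

open MvPolynomial

variable (K : Type*) [Field K]

/-- The monomial `x^w`. -/
noncomputable def mono {m : ℕ} (w : Fin m → ℕ) : MvPolynomial (Fin m) K :=
  ∏ i, X i ^ w i

/-- The positive part `u⁺` of an integer vector. -/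
def intPos {m : ℕ} (u : Fin m → ℤ) : Fin m → ℕ := fun i => (u i).toNat

/-- The negative part `u⁻` of an integer vector. -/
def intNeg {m : ℕ} (u : Fin m → ℤ) : Fin m → ℕ := fun i => (-u i).toNat

/-- Support of a vector of naturals. -/
def suppN {m : ℕ} (w : Fin m → ℕ) : Set (Fin m) := {i | w i ≠ 0}

/-- Support of a vector of integers. -/
def suppZ {m : ℕ} (u : Fin m → ℤ) : Set (Fin m) := {i | u i ≠ 0}

/-- The lattice ideal `I_L`. -/
noncomputable def latticeIdeal {m : ℕ} (L : AddSubgroup (Fin m → ℤ)) :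
    Ideal (MvPolynomial (Fin m) K) :=
  Ideal.span {f | ∃ u ∈ L, f = mono K (intPos u) - mono K (intNeg u)}

/-- A binomial: a difference of two monomials. -/
def IsBinomial {m : ℕ} (f : MvPolynomial (Fin m) K) : Prop :=
  ∃ u v : Fin m → ℕ, f = mono K u - mono K v

/-- `x^w` is an indispensable monomial of `I_L`: every binomial generating set of `I_L`
contains a binomial one of whose monomials is `x^w`. -/
def IsIndispMonomial {m : ℕ} (L : AddSubgroup (Fin m → ℤ)) (w : Fin m → ℕ) : Prop :=
  ∀ B : Set (MvPolynomial (Fin m) K), (∀ f ∈ B, IsBinomial K f) →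
    Ideal.span B = latticeIdeal K L →
    ∃ f ∈ B, ∃ v : Fin m → ℕ, f = mono K w - mono K v ∨ f = mono K v - mono K w

/-- The set `T` of supports of indispensable monomials of `I_L`. -/
def Tsupp {m : ℕ} (L : AddSubgroup (Fin m → ℤ)) : Set (Set (Fin m)) :=
  {E | ∃ w : Fin m → ℕ, IsIndispMonomial K L w ∧ E = suppN w}

/-- `T_min`, the set of minimal elements of `T` with respect to inclusion. -/
def Tmin {m : ℕ} (L : AddSubgroup (Fin m → ℤ)) : Set (Set (Fin m)) :=
  {E ∈ Tsupp K L | ∀ E' ∈ Tsupp K L, E' ⊆ E → E' = E}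

/-- The saturation `Sat(L)` of the lattice `L`. -/
def satL {m : ℕ} (L : AddSubgroup (Fin m → ℤ)) : Set (Fin m → ℤ) :=
  {u | ∃ d : ℤ, d ≠ 0 ∧ d • u ∈ L}

/-- A circuit of `Sat(L)`: a nonzero element of `Sat(L)` of minimal support
whose coordinates are relatively prime. -/
def IsCircuit {m : ℕ} (L : AddSubgroup (Fin m → ℤ)) (u : Fin m → ℤ) : Prop :=
  u ≠ 0 ∧ u ∈ satL L ∧
    (∀ v ∈ satL L, v ≠ 0 → suppZ v ⊆ suppZ u → suppZ v = suppZ u) ∧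
    Finset.univ.gcd (fun i => (u i).natAbs) = 1

/-- The set of cardinalities of binomial generating sets of `I_L`;
`μ(I_L)` is its infimum. -/
def muSet {m : ℕ} (L : AddSubgroup (Fin m → ℤ)) : Set ℕ :=
  {t | ∃ B : Finset (MvPolynomial (Fin m) K), B.card = t ∧
        (∀ f ∈ B, IsBinomial K f) ∧ Ideal.span (B : Set (MvPolynomial (Fin m) K)) = latticeIdeal K L}

/-- The set of numbers `s` such that some binomials `B_1,…,B_s ∈ I_L` generate
`rad(I_L)` up to radical; `bar(I_L)` is its infimum. -/
def barSet {m : ℕ} (L : AddSubgroup (Fin m → ℤ)) : Set ℕ :=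
  {s | ∃ B : Fin s → MvPolynomial (Fin m) K,
        (∀ j, IsBinomial K (B j) ∧ B j ∈ latticeIdeal K L) ∧
        (latticeIdeal K L).radical = (Ideal.span (Set.range B)).radical}

/-!
Write `1_E` for the point with coordinates `1` on `E` and `0` elsewhere. The binomial `x^u - x^v`
vanishes at `1_E` iff `supp u ⊆ E ↔ supp v ⊆ E`, and binomials generating an ideal up to radical
have the same zeros `1_E` as the ideal. Let `P` be the unique minimal system of binomial generators.
Monomials of two different members `x^u - x^v`, `x^w - x^w'` of `P` never divide one another:
if `x^u = x^d x^w`, then `x^u - x^v` could be exchanged for `x^d x^w' - x^v`. The monomials being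
squarefree, the same holds for inclusion of supports, and what remains is order theory in the
lattice of subsets: if `B_1, …, B_s` has the same zeros `1_E` as `P`, then each `f ∈ P` traps at
least two of the `2s` monomial supports of the `B_j` between supports of its own monomials, and no
support is trapped by two members of `P`. Hence `2 |P| ≤ 2 s`.
-/

section Balanced

variable {ι κ α : Type*}

section LE

variable [LE α] {U : ι → Bool → α}

/-- `e` is balanced for a family of pairs if it lies above both members or above neither member of
each pair. For the supports of the monomials of a family of binomials, the balanced sets are the
supports of the common zeros of the family with coordinates in `{0, 1}`. -/
def IsBalanced (U : ι → Bool → α) (e : α) : Prop :=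
  ∀ i, U i true ≤ e ↔ U i false ≤ e

theorem IsBalanced.le_iff {e : α} (h : IsBalanced U e) (i : ι) (b : Bool) :
    U i b ≤ e ↔ U i (!b) ≤ e := by
  cases b
  · exact (h i).symm
  · exact h i

theorem not_isBalanced_iff {e : α} :
    ¬ IsBalanced U e ↔ ∃ i b, U i b ≤ e ∧ ¬ U i (!b) ≤ e := by
  simp only [IsBalanced, not_forall, Bool.exists_bool, Bool.not_false, Bool.not_true]
  exact exists_congr fun i => by tauto

end LE

variable [PartialOrder α] {U : ι → Bool → α} {D : κ → Bool → α}

theorem exists_eq_of_not_le (hU : ∀ i i' b c, U i b ≤ U i' c → i = i')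
    (hUD : ∀ e, IsBalanced U e ↔ IsBalanced D e) {i : ι} {b : Bool} (hb : ¬ U i (!b) ≤ U i b) :
    ∃ j x, D j x = U i b ∧ ¬ D j (!x) ≤ D j x := by
  have hunbal : ¬ IsBalanced D (U i b) :=
    (hUD _).not.1 (not_isBalanced_iff.2 ⟨i, b, le_rfl, hb⟩)
  obtain ⟨j, x, hle, hnle⟩ := not_isBalanced_iff.1 hunbal
  have hnle' : ¬ D j (!x) ≤ D j x := fun h => hnle (h.trans hle)
  have hunbal' : ¬ IsBalanced U (D j x) :=
    (hUD _).not.2 (not_isBalanced_iff.2 ⟨j, x, le_rfl, hnle'⟩)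
  obtain ⟨i', c, hc, -⟩ := not_isBalanced_iff.1 hunbal'
  obtain rfl := hU i' i c b (hc.trans hle)
  obtain rfl | rfl := Bool.eq_or_eq_not c b
  · exact ⟨j, x, hle.antisymm hc, hnle'⟩
  · exact absurd (hc.trans hle) hb

theorem isBalanced_of_le (hU : ∀ i i' b c, U i b ≤ U i' c → i = i')
    {i : ι} {b : Bool} (hb : U i (!b) ≤ U i b) : IsBalanced U (U i b) := by
  by_contra h
  obtain ⟨i', c, hc, hnc⟩ := not_isBalanced_iff.1 h
  obtain rfl := hU i' i c b hc
  obtain rfl | rfl := Bool.eq_or_eq_not c b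
  · exact hnc hb
  · exact hnc (by rw [Bool.not_not])

theorem exists_mem_Icc_of_le (hU : ∀ i i' b c, U i b ≤ U i' c → i = i')
    (hUD : ∀ e, IsBalanced U e ↔ IsBalanced D e) {i : ι} {b : Bool}
    (hb : U i (!b) ≤ U i b) (hnb : ¬ U i b ≤ U i (!b)) :
    ∃ j, ∀ x, D j x ∈ Set.Icc (U i (!b)) (U i b) := by
  obtain ⟨j, x, hx, hnx⟩ := exists_eq_of_not_le hU hUD (b := !b) (by rwa [Bool.not_not])
  have hupper : D j (!x) ≤ U i b :=
    (((hUD _).1 (isBalanced_of_le hU hb)).le_iff j x).1 (hx.trans_le hb)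
  have hlower : U i (!b) ≤ D j (!x) := by
    by_contra hlt
    have hunbal : ¬ IsBalanced U (D j (!x)) := (hUD _).not.2
      (not_isBalanced_iff.2 ⟨j, !x, le_rfl, by rwa [Bool.not_not, hx]⟩)
    obtain ⟨i', c, hc, -⟩ := not_isBalanced_iff.1 hunbal
    obtain rfl := hU i' i c b (hc.trans hupper)
    obtain rfl | rfl := Bool.eq_or_eq_not c b
    · exact hlt (hb.trans hc)
    · exact hlt hc
  refine ⟨j, fun y => ?_⟩
  obtain rfl | rfl := Bool.eq_or_eq_not y x
  · exact ⟨hx.ge, hx.trans_le hb⟩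
  · exact ⟨hlower, hupper⟩

theorem exists_injective_between (hne : ∀ i, U i true ≠ U i false)
    (hU : ∀ i i' b c, U i b ≤ U i' c → i = i')
    (hUD : ∀ e, IsBalanced U e ↔ IsBalanced D e) (i : ι) :
    ∃ q : Bool → κ × Bool, Function.Injective q ∧
      ∀ b, ∃ c d, U i c ≤ D (q b).1 (q b).2 ∧ D (q b).1 (q b).2 ≤ U i d := by
  by_cases hcomp : ∃ b, U i (!b) ≤ U i b
  · obtain ⟨b, hb⟩ := hcomp
    have hnb : ¬ U i b ≤ U i (!b) := fun h => hne i <| by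
      cases b
      · exact hb.antisymm h
      · exact h.antisymm hb
    obtain ⟨j, hj⟩ := exists_mem_Icc_of_le hU hUD hb hnb
    exact ⟨Prod.mk j, Prod.mk_right_injective j, fun x => ⟨!b, b, hj x⟩⟩
  · have hincomp : ∀ b, ¬ U i (!b) ≤ U i b := not_exists.1 hcomp
    choose j x hD _ using fun b => exists_eq_of_not_le hU hUD (hincomp b)
    refine ⟨fun b => (j b, x b), fun b c hbc => ?_, fun b => ⟨b, b, (hD b).ge, (hD b).le⟩⟩
    have hUbc : U i b = U i c := by
      rw [← hD b, ← hD c, (Prod.mk.inj hbc).1, (Prod.mk.inj hbc).2]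
    obtain rfl | rfl := Bool.eq_or_eq_not b c
    · rfl
    · exact absurd hUbc.le (hincomp c)

theorem card_le_card_of_isBalanced_iff [Fintype ι] [Fintype κ] (hne : ∀ i, U i true ≠ U i false)
    (hU : ∀ i i' b c, U i b ≤ U i' c → i = i')
    (hUD : ∀ e, IsBalanced U e ↔ IsBalanced D e) : Fintype.card ι ≤ Fintype.card κ := by
  choose q hq hbetween using exists_injective_between hne hU hUD
  have hinj : Function.Injective fun p : ι × Bool => q p.1 p.2 := by
    rintro ⟨i, b⟩ ⟨i', b'⟩ (h : q i b = q i' b')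
    obtain ⟨c, -, hc, -⟩ := hbetween i b
    obtain ⟨-, d, -, hd⟩ := hbetween i' b'
    rw [h] at hc
    obtain rfl := hU i i' c d (hc.trans hd)
    rw [hq i h]
  have hcard := Fintype.card_le_of_injective _ hinj
  simp only [Fintype.card_prod, Fintype.card_bool] at hcard
  omega

end Balanced

section Binomials

variable {K} {m : ℕ} {f g : MvPolynomial (Fin m) K} {u v w w' : Fin m → ℕ}

theorem mono_add (u v : Fin m → ℕ) : mono K (u + v) = mono K u * mono K v := by
  simp only [mono, Pi.add_apply, pow_add, Finset.prod_mul_distrib]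

theorem mono_eq_monomial (w : Fin m → ℕ) :
    mono K w = monomial (Finsupp.equivFunOnFinite.symm w) (1 : K) := by
  simp [mono, monomial_eq, Finsupp.prod_fintype]

theorem coeff_mono (w v : Fin m → ℕ) :
    coeff (Finsupp.equivFunOnFinite.symm v) (mono K w) = if w = v then (1 : K) else 0 := by
  simp [mono_eq_monomial, coeff_monomial]

theorem mono_injective : Function.Injective (mono K : (Fin m → ℕ) → MvPolynomial (Fin m) K) := by
  intro u v h
  rw [mono_eq_monomial, mono_eq_monomial] at h
  exact Finsupp.equivFunOnFinite.symm.injective (monomial_left_injective one_ne_zero h)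

theorem suppN_subset_suppN_iff (hu : u ≤ 1) : suppN u ⊆ suppN v ↔ u ≤ v := by
  refine forall_congr' fun i => ?_
  have hui : u i ≤ 1 := hu i
  change (u i ≠ 0 → v i ≠ 0) ↔ u i ≤ v i
  omega

open Classical in
theorem eval_indicator_mono (E : Set (Fin m)) (w : Fin m → ℕ) :
    eval (E.indicator 1) (mono K w) = if suppN w ⊆ E then 1 else 0 := by
  simp only [mono, map_prod, map_pow, eval_X]
  split_ifs with h
  · refine Finset.prod_eq_one fun i _ => ?_
    by_cases hi : i ∈ E
    · simp [hi]
    · simp [show w i = 0 from not_not.1 fun hwi => hi (h hwi)]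
  · obtain ⟨i, hwi, hi⟩ := Set.not_subset.1 h
    exact Finset.prod_eq_zero (Finset.mem_univ i) (by simp [hi, show w i ≠ 0 from hwi])

/-- `f` is `x^u - x^v` up to sign. Allowing both signs makes the notion symmetric in `u` and `v`,
and invariant under `f ↦ -f`. -/
def IsBinomialOn (f : MvPolynomial (Fin m) K) (u v : Fin m → ℕ) : Prop :=
  f = mono K u - mono K v ∨ f = mono K v - mono K u

namespace IsBinomialOn

theorem symm (h : IsBinomialOn f u v) : IsBinomialOn f v u :=
  Or.symm h

theorem neg (h : IsBinomialOn f u v) : IsBinomialOn (-f) u v := by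
  rcases h with rfl | rfl
  · exact Or.inr (neg_sub _ _)
  · exact Or.inl (neg_sub _ _)

theorem bool {U : Bool → Fin m → ℕ} (h : IsBinomialOn f (U true) (U false)) (b : Bool) :
    IsBinomialOn f (U b) (U !b) := by
  cases b
  · exact h.symm
  · exact h

theorem ne (h : IsBinomialOn f u v) (hf : f ≠ 0) : u ≠ v := by
  rintro rfl
  rcases h with rfl | rfl <;> exact hf (sub_self _)

theorem mem_iff (h : IsBinomialOn f u v) (J : Ideal (MvPolynomial (Fin m) K)) :
    f ∈ J ↔ mono K u - mono K v ∈ J := by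
  rcases h with rfl | rfl
  · rfl
  · rw [← neg_mem_iff, neg_sub]

theorem eq_of_sub (h : IsBinomialOn (mono K w - mono K v) u v) (huv : u ≠ v) : w = u := by
  rcases h with h | h
  · exact mono_injective (sub_left_injective h)
  · by_contra hwu
    have hcoeff := congrArg (coeff (Finsupp.equivFunOnFinite.symm u)) h
    simp [coeff_mono, hwu, huv.symm] at hcoeff

theorem eval_indicator_eq_zero_iff (h : IsBinomialOn f u v) (E : Set (Fin m)) :
    eval (E.indicator 1) f = 0 ↔ (suppN u ⊆ E ↔ suppN v ⊆ E) := by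
  rcases h with rfl | rfl <;> rw [map_sub, eval_indicator_mono, eval_indicator_mono] <;>
    split_ifs <;> simp [*]

end IsBinomialOn

/-- `f` is a difference of two squarefree monomials. -/
def IsSquarefreeBinomial (f : MvPolynomial (Fin m) K) : Prop :=
  ∃ u v : Fin m → ℕ, u ≤ 1 ∧ v ≤ 1 ∧ f = mono K u - mono K v

theorem IsSquarefreeBinomial.isBinomial (h : IsSquarefreeBinomial f) : IsBinomial K f :=
  let ⟨u, v, _, _, hf⟩ := h
  ⟨u, v, hf⟩

theorem forall_eval_eq_zero_iff_of_radical_eq {σ R : Type*} [CommRing R] [IsDomain R]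
    {S T : Set (MvPolynomial σ R)} (h : (Ideal.span S).radical = (Ideal.span T).radical)
    (x : σ → R) : (∀ f ∈ S, eval x f = 0) ↔ ∀ f ∈ T, eval x f = 0 := by
  have hker (S : Set (MvPolynomial σ R)) :
      (∀ f ∈ S, eval x f = 0) ↔ (Ideal.span S).radical ≤ RingHom.ker (eval x) := by
    rw [(RingHom.ker_isPrime (eval x)).radical_le_iff, Ideal.span_le]
    rfl
  rw [hker, hker, h]

end Binomials

section MinimalSystems

variable {K} {m : ℕ} {I : Ideal (MvPolynomial (Fin m) K)}

/-- `B` is a generating set of the ideal `I` consisting of binomials. -/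
def IsBinomialGenerating (I : Ideal (MvPolynomial (Fin m) K))
    (B : Set (MvPolynomial (Fin m) K)) : Prop :=
  (∀ f ∈ B, IsBinomial K f) ∧ Ideal.span B = I

/-- The cardinalities of the finite binomial generating sets of an arbitrary ideal `I`: for a
lattice ideal this is `muSet`, and `μ(I)` is its infimum. -/
def idealMuSet (I : Ideal (MvPolynomial (Fin m) K)) : Set ℕ :=
  {t | ∃ B : Finset (MvPolynomial (Fin m) K), B.card = t ∧
    IsBinomialGenerating I (B : Set (MvPolynomial (Fin m) K))}

/-- The numbers of binomials in an arbitrary ideal `I` that can generate `I` up to radical: for a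
lattice ideal this is `barSet`, and `bar(I)` is its infimum. -/
def idealBarSet (I : Ideal (MvPolynomial (Fin m) K)) : Set ℕ :=
  {s | ∃ B : Fin s → MvPolynomial (Fin m) K,
    (∀ j, IsBinomial K (B j) ∧ B j ∈ I) ∧ I.radical = (Ideal.span (Set.range B)).radical}

/-- `f` is an indispensable binomial of `I`: up to sign it belongs to every binomial generating
set of `I`. -/
def IsIndispBinomial (I : Ideal (MvPolynomial (Fin m) K)) (f : MvPolynomial (Fin m) K) : Prop :=
  ∀ B : Set (MvPolynomial (Fin m) K), IsBinomialGenerating I B → f ∈ B ∨ -f ∈ B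

/-- `P` is the unique minimal system of binomial generators of `I`, uniqueness being up to the
signs of the generators. -/
structure IsUniqueMinimalSystem (I : Ideal (MvPolynomial (Fin m) K))
    (P : Finset (MvPolynomial (Fin m) K)) : Prop where
  card_eq : P.card = sInf (idealMuSet I)
  isBinomialGenerating : IsBinomialGenerating I (P : Set (MvPolynomial (Fin m) K))
  isIndispBinomial : ∀ f ∈ P, IsIndispBinomial I f

theorem IsBinomialGenerating.of_sdiff_subset {B C : Set (MvPolynomial (Fin m) K)}
    {f : MvPolynomial (Fin m) K} (hB : IsBinomialGenerating I B) (hC : ∀ g ∈ C, IsBinomial K g)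
    (hCI : C ⊆ I) (hBC : B \ {f} ⊆ C) (hf : f ∈ Ideal.span C) : IsBinomialGenerating I C := by
  refine ⟨hC, (Ideal.span_le.2 hCI).antisymm ?_⟩
  rw [← hB.2, Ideal.span_le]
  intro g hg
  by_cases hgf : g = f
  · exact hgf ▸ hf
  · exact Ideal.subset_span (hBC ⟨hg, hgf⟩)

theorem IsBinomialGenerating.card_mem_idealBarSet {P : Finset (MvPolynomial (Fin m) K)}
    (hP : IsBinomialGenerating I (P : Set (MvPolynomial (Fin m) K))) :
    P.card ∈ idealBarSet I := by
  have hrange : Set.range ((↑) ∘ P.equivFin.symm) = (P : Set (MvPolynomial (Fin m) K)) := by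
    rw [EquivLike.range_comp]
    exact Subtype.range_coe
  refine ⟨(↑) ∘ P.equivFin.symm, fun j => ?_, by rw [hrange, hP.2]⟩
  have hj : (P.equivFin.symm j : MvPolynomial (Fin m) K) ∈ P := (P.equivFin.symm j).2
  exact ⟨hP.1 _ hj, hP.2 ▸ Ideal.subset_span hj⟩

namespace IsUniqueMinimalSystem

variable {P : Finset (MvPolynomial (Fin m) K)} {f g : MvPolynomial (Fin m) K}
  {u v w w' : Fin m → ℕ}

theorem mem_ideal (hP : IsUniqueMinimalSystem I P) (hf : f ∈ P) : f ∈ I :=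
  hP.isBinomialGenerating.2 ▸ Ideal.subset_span hf

theorem notMem_span_sdiff (hP : IsUniqueMinimalSystem I P) (hf : f ∈ P) :
    f ∉ Ideal.span ((P : Set (MvPolynomial (Fin m) K)) \ {f}) := by
  classical
  intro hmem
  have hgen : IsBinomialGenerating I ((P.erase f : Finset _) : Set (MvPolynomial (Fin m) K)) := by
    rw [Finset.coe_erase]
    exact hP.isBinomialGenerating.of_sdiff_subset (fun g hg => hP.isBinomialGenerating.1 g hg.1)
      (fun g hg => hP.mem_ideal hg.1) subset_rfl hmem
  have hle : sInf (idealMuSet I) ≤ (P.erase f).card := Nat.sInf_le ⟨_, rfl, hgen⟩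
  exact (Finset.card_erase_lt_of_mem hf).not_ge (hP.card_eq.trans_le hle)

theorem ne_zero (hP : IsUniqueMinimalSystem I P) (hf : f ∈ P) : f ≠ 0 := by
  rintro rfl
  exact hP.notMem_span_sdiff hf (zero_mem _)

theorem eq_or_neg_eq_of_mem_span_insert (hP : IsUniqueMinimalSystem I P) (hf : f ∈ P)
    (hg : IsBinomial K g) (hgI : g ∈ I)
    (hfg : f ∈ Ideal.span (insert g ((P : Set (MvPolynomial (Fin m) K)) \ {f}))) :
    f = g ∨ -f = g := by
  have hgen : IsBinomialGenerating I (insert g ((P : Set (MvPolynomial (Fin m) K)) \ {f})) := by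
    refine hP.isBinomialGenerating.of_sdiff_subset ?_ ?_ (Set.subset_insert _ _) hfg
    · exact Set.forall_mem_insert.2 ⟨hg, fun p hp => hP.isBinomialGenerating.1 p hp.1⟩
    · exact Set.insert_subset hgI fun p hp => hP.mem_ideal hp.1
  refine (hP.isIndispBinomial f hf _ hgen).imp (fun h => ?_) (fun h => ?_)
  · exact h.resolve_right fun h => h.2 rfl
  · exact h.resolve_right fun h =>
      hP.notMem_span_sdiff hf (neg_mem_iff.1 (Ideal.subset_span h))

theorem eq_of_le (hP : IsUniqueMinimalSystem I P) (hf : f ∈ P) (hg : g ∈ P)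
    (hfuv : IsBinomialOn f u v) (hgww' : IsBinomialOn g w w') (hle : w ≤ u) : g = f := by
  by_contra hgf
  obtain ⟨d, rfl⟩ := exists_add_of_le hle
  let n := mono K (w' + d) - mono K v
  have hn : mono K (w + d) - mono K v = n + mono K d * (mono K w - mono K w') := by
    simp only [n, mono_add]
    ring
  have hgJ : g ∈ Ideal.span (insert n ((P : Set (MvPolynomial (Fin m) K)) \ {f})) :=
    Ideal.subset_span (Set.mem_insert_of_mem _ ⟨hg, hgf⟩)
  have hfJ : f ∈ Ideal.span (insert n ((P : Set (MvPolynomial (Fin m) K)) \ {f})) := by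
    rw [hfuv.mem_iff, hn]
    exact add_mem (Ideal.subset_span (Set.mem_insert _ _))
      (Ideal.mul_mem_left _ _ ((hgww'.mem_iff _).1 hgJ))
  have hnI : n ∈ I := by
    rw [eq_sub_of_add_eq hn.symm]
    exact sub_mem ((hfuv.mem_iff _).1 (hP.mem_ideal hf))
      (Ideal.mul_mem_left _ _ ((hgww'.mem_iff _).1 (hP.mem_ideal hg)))
  have hnuv : IsBinomialOn (mono K (w' + d) - mono K v) (w + d) v := by
    rcases hP.eq_or_neg_eq_of_mem_span_insert hf ⟨_, _, rfl⟩ hnI hfJ with h | h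
    · exact h ▸ hfuv
    · exact h ▸ hfuv.neg
  have hw : w' + d = w + d := hnuv.eq_of_sub (hfuv.ne (hP.ne_zero hf))
  exact hgww'.ne (hP.ne_zero hg) (add_right_cancel hw).symm

theorem exists_squarefree_isBinomialOn (hP : IsUniqueMinimalSystem I P)
    {S : Set (MvPolynomial (Fin m) K)} (hS : ∀ f ∈ S, IsSquarefreeBinomial f)
    (hspan : Ideal.span S = I) (hf : f ∈ P) :
    ∃ U : Bool → Fin m → ℕ, (∀ b, U b ≤ 1) ∧ IsBinomialOn f (U true) (U false) := by
  rcases hP.isIndispBinomial f hf S ⟨fun g hg => (hS g hg).isBinomial, hspan⟩ with h | h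
  · obtain ⟨u, v, hu, hv, hfuv⟩ := hS _ h
    exact ⟨fun b => cond b u v, Bool.forall_bool.2 ⟨hv, hu⟩, Or.inl hfuv⟩
  · obtain ⟨u, v, hu, hv, hfuv⟩ := hS _ h
    exact ⟨fun b => cond b u v, Bool.forall_bool.2 ⟨hv, hu⟩,
      neg_neg f ▸ IsBinomialOn.neg (Or.inl hfuv)⟩

theorem card_le (hP : IsUniqueMinimalSystem I P) {S : Set (MvPolynomial (Fin m) K)}
    (hS : ∀ f ∈ S, IsSquarefreeBinomial f) (hspan : Ideal.span S = I) {s : ℕ}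
    {B : Fin s → MvPolynomial (Fin m) K} (hB : ∀ j, IsBinomial K (B j))
    (hrad : I.radical = (Ideal.span (Set.range B)).radical) : P.card ≤ s := by
  choose U hU1 hU using fun f : P => hP.exists_squarefree_isBinomialOn hS hspan f.2
  choose c d hcd using hB
  let D (j : Fin s) (b : Bool) : Set (Fin m) := suppN (cond b (c j) (d j))
  have hle (f g : P) (a b : Bool) (h : U f a ≤ U g b) : f = g :=
    Subtype.ext (hP.eq_of_le g.2 f.2 ((hU g).bool b) ((hU f).bool a) h)
  have hne (f : P) : suppN (U f true) ≠ suppN (U f false) := fun h =>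
    (hU f).ne (hP.ne_zero f.2) <| ((suppN_subset_suppN_iff (hU1 f true)).1 h.subset).antisymm
      ((suppN_subset_suppN_iff (hU1 f false)).1 h.superset)
  have hbalanced (E : Set (Fin m)) :
      IsBalanced (fun f b => suppN (U f b)) E ↔ IsBalanced D E := calc
    _ ↔ ∀ f : P, eval (E.indicator 1) f.1 = 0 :=
      forall_congr' fun f => ((hU f).eval_indicator_eq_zero_iff E).symm
    _ ↔ ∀ f ∈ (P : Set (MvPolynomial (Fin m) K)), eval (E.indicator 1) f = 0 :=
      Subtype.forall
    _ ↔ ∀ f ∈ Set.range B, eval (E.indicator 1) f = 0 :=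
      forall_eval_eq_zero_iff_of_radical_eq (by rw [hP.isBinomialGenerating.2, hrad]) _
    _ ↔ ∀ j, eval (E.indicator 1) (B j) = 0 := Set.forall_mem_range
    _ ↔ IsBalanced D E :=
      forall_congr' fun j => IsBinomialOn.eval_indicator_eq_zero_iff (Or.inl (hcd j)) E
  simpa using card_le_card_of_isBalanced_iff hne
    (fun f g a b h => hle f g a b ((suppN_subset_suppN_iff (hU1 f a)).1 h)) hbalanced

end IsUniqueMinimalSystem

theorem stmt4_general {S : Set (MvPolynomial (Fin m) K)} {P : Finset (MvPolynomial (Fin m) K)}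
    (hS : ∀ f ∈ S, IsSquarefreeBinomial f) (hspan : Ideal.span S = I)
    (hP : IsUniqueMinimalSystem I P) : sInf (idealBarSet I) = sInf (idealMuSet I) := by
  have hleast : IsLeast (idealBarSet I) P.card :=
    ⟨hP.isBinomialGenerating.card_mem_idealBarSet,
      fun _ ⟨_, hB, hrad⟩ => hP.card_le hS hspan (fun j => (hB j).1) hrad⟩
  rw [hleast.csInf_eq, hP.card_eq]

end MinimalSystems

theorem stmt4 {m : ℕ} (L : AddSubgroup (Fin m → ℤ))
    (hL0 : L ≠ ⊥) (hLpos : ∀ u ∈ L, (∀ i, 0 ≤ u i) → u = 0)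
    -- `I_L` has a binomial generating set consisting of differences of squarefree monomials
    (t : ℕ) (Bgen : Fin t → MvPolynomial (Fin m) K)
    (hsf : ∀ i, ∃ u v : Fin m → ℕ, (∀ k, u k ≤ 1) ∧ (∀ k, v k ≤ 1) ∧
      Bgen i = mono K u - mono K v)
    (hgen : Ideal.span (Set.range Bgen) = latticeIdeal K L)
    -- `I_L` has a unique minimal system of binomial generators
    (huniq : ∃ P : Finset (MvPolynomial (Fin m) K), P.card = sInf (muSet K L) ∧
      (∀ f ∈ P, IsBinomial K f) ∧
      Ideal.span (P : Set (MvPolynomial (Fin m) K)) = latticeIdeal K L ∧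
      ∀ f ∈ P, ∀ B : Set (MvPolynomial (Fin m) K), (∀ g ∈ B, IsBinomial K g) →
        Ideal.span B = latticeIdeal K L → (f ∈ B ∨ -f ∈ B)) :
    sInf (barSet K L) = sInf (muSet K L) := by
  obtain ⟨P, hcard, hbinom, hPspan, hindisp⟩ := huniq
  exact stmt4_general (Set.forall_mem_range.2 hsf) hgen
    ⟨hcard, ⟨hbinom, hPspan⟩, fun f hf B hB => hindisp f hf B hB.1 hB.2⟩
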